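/- Let G be a group, let M be a nonempty compact Hausdorff G-space on which the action is minimal, and let B be a G-boundary, i.e. a nonempty compact Hausdorff G-space on which the action is minimal and strongly proximal. Then there is at most one unital positive G-equivariant linear map from C(B,ℝ) to C(M,ℝ), and if such a map exists, it is multiplicative (a unital ring homomorphism) and injective. -/

import Mathlib

open MeasureTheory

/-!
Let `φ : C(B, ℝ) → C(M, ℝ)` be unital, positive and equivariant. For `x : M` the functional
`f ↦ φ f x` is integration against a probability measure `ν` on `B`, and the translate `s • ν`
represents `f ↦ φ f (s • x)`. As `M` is compact, the measures representing `f ↦ φ f y` for some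
`y : M` form a closed set; it contains the orbit of `ν`, hence, by strong proximality, a Dirac
measure. So `φ f y = f b` for some `y` and `b`, and then `φ f (s • y) = f (s • b)` for every `s`:
along an orbit of `M`, `φ` is evaluation along an orbit of `B`. Density of these orbits makes `φ`
multiplicative and injective. Finally, the midpoint of two such maps is again such a map, hence
multiplicative, which forces the two maps to be equal because squaring is strictly convex.
-/

theorem eq_of_midpoint_sq_eq_midpoint_sq {𝕜 R : Type*} [CommRing 𝕜] [Invertible (2 : 𝕜)]
    [Ring R] [IsReduced R] [Algebra 𝕜 R] {a b : R}
    (h : midpoint 𝕜 a b ^ 2 = midpoint 𝕜 (a ^ 2) (b ^ 2)) : a = b := by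
  have hsq : (a - b) ^ 2 = 0 := by
    calc (a - b) ^ 2 = 2 * (a ^ 2 + b ^ 2) - (a + b) ^ 2 := by noncomm_ring
      _ = 2 * (midpoint 𝕜 (a ^ 2) (b ^ 2) + midpoint 𝕜 (a ^ 2) (b ^ 2))
          - (midpoint 𝕜 a b + midpoint 𝕜 a b) ^ 2 := by
        simp only [midpoint_add_self]
      _ = 0 := by rw [← h]; noncomm_ring
  exact sub_eq_zero.1 (eq_zero_of_pow_eq_zero hsq)

section Measures

variable {B : Type*} [TopologicalSpace B] [CompactSpace B] [MeasurableSpace B]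

theorem exists_regular_probabilityMeasure_forall_integral_eq [T2Space B] [BorelSpace B]
    (Λ : C(B, ℝ) →ₚ[ℝ] ℝ) (hΛ : Λ 1 = 1) :
    ∃ ν : ProbabilityMeasure B, (ν : Measure B).Regular ∧
      ∀ f : C(B, ℝ), ∫ b, f b ∂(ν : Measure B) = Λ f := by
  let Λc : CompactlySupportedContinuousMap B ℝ →ₚ[ℝ] ℝ :=
    { toFun f := Λ f.toContinuousMap
      map_add' f g := map_add Λ f.toContinuousMap g.toContinuousMap
      map_smul' c f := map_smul Λ c f.toContinuousMap
      monotone' _ _ hfg := Λ.monotone' hfg }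
  have integral_eq (f : C(B, ℝ)) : ∫ b, f b ∂(RealRMK.rieszMeasure Λc) = Λ f :=
    RealRMK.integral_rieszMeasure Λc (CompactlySupportedContinuousMap.continuousMapEquiv f)
  have isProbabilityMeasure : IsProbabilityMeasure (RealRMK.rieszMeasure Λc) := by
    have hmass := integral_eq 1
    simp only [ContinuousMap.one_apply, integral_const, smul_eq_mul, mul_one, hΛ] at hmass
    exact ⟨(ENNReal.toReal_eq_one_iff _).1 hmass⟩
  exact ⟨⟨RealRMK.rieszMeasure Λc, isProbabilityMeasure⟩, RealRMK.regular_rieszMeasure Λc,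
    integral_eq⟩

theorem isClosed_exists_forall_integral_eq_apply [OpensMeasurableSpace B] {M : Type*}
    [TopologicalSpace M] [CompactSpace M] (φ : C(B, ℝ) → C(M, ℝ)) :
    IsClosed {μ : ProbabilityMeasure B |
      ∃ y : M, ∀ f : C(B, ℝ), ∫ b, f b ∂(μ : Measure B) = φ f y} := by
  have isClosed_graph : IsClosed {p : ProbabilityMeasure B × M |
      ∀ f : C(B, ℝ), ∫ b, f b ∂(p.1 : Measure B) = φ f p.2} := by
    simp only [Set.ofPred_forall]
    exact isClosed_iInter fun f => isClosed_eq
      ((ProbabilityMeasure.continuous_integral_continuousMap f).comp continuous_fst)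
      ((φ f).continuous.comp continuous_snd)
  convert isClosedMap_fst_of_compactSpace _ isClosed_graph using 1
  ext μ
  simp

end Measures

/-- Strong proximality of the action of `G` on `B`: the weak closure of the orbit of any regular
Borel probability measure contains a Dirac measure. -/
def IsStronglyProximal (G B : Type*) [TopologicalSpace B] [MeasurableSpace B] [BorelSpace B]
    [SMul G B] [ContinuousConstSMul G B] : Prop :=
  ∀ ν : ProbabilityMeasure B, (ν : Measure B).Regular →
    ∃ b : B, (⟨Measure.dirac b, inferInstance⟩ : ProbabilityMeasure B) ∈
      closure {μ : ProbabilityMeasure B | ∃ s : G,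
        μ = ν.map (continuous_const_smul s).measurable.aemeasurable}

/-- Unital positive `G`-equivariant linear maps `C(B, ℝ) → C(M, ℝ)`. Equivariance is expressed
through precomposition with `s • ·` rather than with `s⁻¹ • ·`, which makes sense without
inverses in `G`. -/
structure IsUnitalPositiveEquivariant (G : Type*) {B M : Type*} [TopologicalSpace B]
    [TopologicalSpace M] [SMul G B] [ContinuousConstSMul G B] [SMul G M]
    (φ : C(B, ℝ) →ₗ[ℝ] C(M, ℝ)) : Prop where
  map_one : φ 1 = 1
  map_nonneg : ∀ f : C(B, ℝ), 0 ≤ f → 0 ≤ φ f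
  map_comp_smul : ∀ (s : G) (f : C(B, ℝ)) (x : M),
    φ (f.comp ⟨fun b => s • b, continuous_const_smul s⟩) x = φ f (s • x)

namespace IsUnitalPositiveEquivariant

variable {G B M : Type*} [TopologicalSpace B] [TopologicalSpace M]

theorem of_map_comp_inv_smul [Group G] [MulAction G B] [ContinuousConstSMul G B] [MulAction G M]
    {φ : C(B, ℝ) →ₗ[ℝ] C(M, ℝ)} (h1 : φ 1 = 1)
    (hpos : ∀ f : C(B, ℝ), (∀ b, 0 ≤ f b) → ∀ x : M, 0 ≤ φ f x)
    (hequiv : ∀ (s : G) (f : C(B, ℝ)) (x : M),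
      φ (f.comp ⟨fun b => s⁻¹ • b, continuous_const_smul s⁻¹⟩) x = φ f (s⁻¹ • x)) :
    IsUnitalPositiveEquivariant G φ where
  map_one := h1
  map_nonneg := hpos
  map_comp_smul s := by simpa only [inv_inv] using hequiv s⁻¹

section SMul

variable [SMul G B] [ContinuousConstSMul G B] [SMul G M]

protected theorem convex :
    Convex ℝ {φ : C(B, ℝ) →ₗ[ℝ] C(M, ℝ) | IsUnitalPositiveEquivariant G φ} := by
  intro φ hφ ψ hψ a b ha hb hab
  exact
    { map_one := by simp [hφ.map_one, hψ.map_one, ← add_smul, hab]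
      map_nonneg f hf := add_nonneg (smul_nonneg ha (hφ.map_nonneg f hf))
        (smul_nonneg hb (hψ.map_nonneg f hf))
      map_comp_smul s f x := by simp [hφ.map_comp_smul, hψ.map_comp_smul] }

variable {φ : C(B, ℝ) →ₗ[ℝ] C(M, ℝ)} [MeasurableSpace B] [BorelSpace B]

theorem integral_map_smul_eq_apply_smul (hφ : IsUnitalPositiveEquivariant G φ) {x : M}
    {ν : ProbabilityMeasure B} (hν : ∀ f : C(B, ℝ), ∫ b, f b ∂(ν : Measure B) = φ f x)
    (s : G) (f : C(B, ℝ)) :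
    ∫ b, f b ∂(ν.map (continuous_const_smul s).measurable.aemeasurable : Measure B) =
      φ f (s • x) := by
  rw [ProbabilityMeasure.toMeasure_map, integral_map
    (continuous_const_smul s).measurable.aemeasurable f.continuous.aestronglyMeasurable,
    ← hφ.map_comp_smul]
  exact hν (f.comp ⟨fun b => s • b, continuous_const_smul s⟩)

variable [CompactSpace B] [T2Space B]

theorem exists_regular_forall_integral_eq_apply (hφ : IsUnitalPositiveEquivariant G φ) (x : M) :
    ∃ ν : ProbabilityMeasure B, (ν : Measure B).Regular ∧
      ∀ f : C(B, ℝ), ∫ b, f b ∂(ν : Measure B) = φ f x :=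
  exists_regular_probabilityMeasure_forall_integral_eq
    (PositiveLinearMap.mk₀ ((ContinuousMap.evalCLM ℝ x).toLinearMap ∘ₗ φ)
      fun f hf => hφ.map_nonneg f hf x)
    (congrArg (fun k : C(M, ℝ) => k x) hφ.map_one)

variable [CompactSpace M] [Nonempty M]

theorem exists_forall_apply_eq (hφ : IsUnitalPositiveEquivariant G φ)
    (hB : IsStronglyProximal G B) : ∃ (y : M) (b : B), ∀ f : C(B, ℝ), φ f y = f b := by
  obtain ⟨x⟩ := ‹Nonempty M›
  obtain ⟨ν, hν_regular, hν⟩ := hφ.exists_regular_forall_integral_eq_apply x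
  obtain ⟨b, hb⟩ := hB ν hν_regular
  have orbit_subset : {μ : ProbabilityMeasure B | ∃ s : G,
      μ = ν.map (continuous_const_smul s).measurable.aemeasurable} ⊆
      {μ | ∃ y : M, ∀ f : C(B, ℝ), ∫ b, f b ∂(μ : Measure B) = φ f y} := by
    rintro _ ⟨s, rfl⟩
    exact ⟨s • x, hφ.integral_map_smul_eq_apply_smul hν s⟩
  obtain ⟨y, hy⟩ :=
    closure_minimal orbit_subset (isClosed_exists_forall_integral_eq_apply φ) hb
  exact ⟨y, b, fun f => by simpa using (hy f).symm⟩

theorem exists_forall_apply_smul_eq (hφ : IsUnitalPositiveEquivariant G φ)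
    (hB : IsStronglyProximal G B) :
    ∃ (y : M) (b : B), ∀ (s : G) (f : C(B, ℝ)), φ f (s • y) = f (s • b) := by
  obtain ⟨y, b, hyb⟩ := hφ.exists_forall_apply_eq hB
  exact ⟨y, b, fun s f => by rw [← hφ.map_comp_smul, hyb]; rfl⟩

end SMul

section IsMinimal

variable [CompactSpace B] [T2Space B] [MeasurableSpace B] [BorelSpace B]
  [CompactSpace M] [Nonempty M] [Monoid G]

protected theorem injective [MulAction G B] [ContinuousConstSMul G B]
    [MulAction.IsMinimal G B] [SMul G M] {φ : C(B, ℝ) →ₗ[ℝ] C(M, ℝ)}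
    (hφ : IsUnitalPositiveEquivariant G φ) (hB : IsStronglyProximal G B) :
    Function.Injective φ := by
  obtain ⟨y, b, hyb⟩ := hφ.exists_forall_apply_smul_eq hB
  intro f g hfg
  refine DFunLike.coe_injective ((denseRange_smul G b).equalizer f.continuous g.continuous ?_)
  ext s
  simp only [Function.comp_apply, ← hyb, hfg]

variable [SMul G B] [ContinuousConstSMul G B] [MulAction G M] [MulAction.IsMinimal G M]
  {φ ψ : C(B, ℝ) →ₗ[ℝ] C(M, ℝ)}

protected theorem map_mul (hφ : IsUnitalPositiveEquivariant G φ) (hB : IsStronglyProximal G B)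
    (f g : C(B, ℝ)) : φ (f * g) = φ f * φ g := by
  obtain ⟨y, b, hyb⟩ := hφ.exists_forall_apply_smul_eq hB
  refine DFunLike.coe_injective ((denseRange_smul G y).equalizer
    (φ (f * g)).continuous (φ f * φ g).continuous ?_)
  ext s
  simp only [Function.comp_apply, ContinuousMap.mul_apply, hyb]

protected theorem eq (hφ : IsUnitalPositiveEquivariant G φ) (hψ : IsUnitalPositiveEquivariant G ψ)
    (hB : IsStronglyProximal G B) : φ = ψ := by
  have hmid : IsUnitalPositiveEquivariant G (midpoint ℝ φ ψ) :=
    IsUnitalPositiveEquivariant.convex.midpoint_mem hφ hψ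
  have midpoint_apply (f : C(B, ℝ)) : midpoint ℝ φ ψ f = midpoint ℝ (φ f) (ψ f) := by
    simp only [midpoint_eq_smul_add, LinearMap.smul_apply, LinearMap.add_apply]
  have isReduced : IsReduced C(M, ℝ) :=
    isReduced_of_injective (ContinuousMap.coeFnRingHom : C(M, ℝ) →+* (M → ℝ))
      DFunLike.coe_injective
  ext1 f
  refine eq_of_midpoint_sq_eq_midpoint_sq (𝕜 := ℝ) ?_
  calc midpoint ℝ (φ f) (ψ f) ^ 2 = midpoint ℝ φ ψ (f * f) := by
        rw [hmid.map_mul hB, midpoint_apply, sq]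
    _ = midpoint ℝ (φ f ^ 2) (ψ f ^ 2) := by
        rw [midpoint_apply, hφ.map_mul hB, hψ.map_mul hB, sq, sq]

end IsMinimal

end IsUnitalPositiveEquivariant

theorem stmt_13_general {G M B : Type*} [Monoid G]
    [TopologicalSpace M] [CompactSpace M] [Nonempty M] [MulAction G M] [MulAction.IsMinimal G M]
    [TopologicalSpace B] [CompactSpace B] [T2Space B]
    [MulAction G B] [ContinuousConstSMul G B] [MulAction.IsMinimal G B]
    [MeasurableSpace B] [BorelSpace B] (hB : IsStronglyProximal G B) :
    (∀ φ₁ φ₂ : C(B, ℝ) →ₗ[ℝ] C(M, ℝ), IsUnitalPositiveEquivariant G φ₁ →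
      IsUnitalPositiveEquivariant G φ₂ → φ₁ = φ₂) ∧
    (∀ φ : C(B, ℝ) →ₗ[ℝ] C(M, ℝ), IsUnitalPositiveEquivariant G φ →
      (∀ f g : C(B, ℝ), φ (f * g) = φ f * φ g) ∧ Function.Injective φ) :=
  ⟨fun _ _ h₁ h₂ => h₁.eq h₂ hB, fun _ h => ⟨h.map_mul hB, h.injective hB⟩⟩

/-- If `M` is a minimal compact Hausdorff `G`-space and `B` is a `G`-boundary (a nonempty
compact Hausdorff `G`-space whose action is minimal and strongly proximal), then there is
at most one unital positive `G`-equivariant linear map `C(B,ℝ) → C(M,ℝ)`, and any such map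
is multiplicative and injective. -/
theorem stmt_13 {G M B : Type*} [Group G]
    [TopologicalSpace M] [CompactSpace M] [T2Space M] [Nonempty M]
    [MulAction G M] [ContinuousConstSMul G M]
    [TopologicalSpace B] [CompactSpace B] [T2Space B] [Nonempty B]
    [MulAction G B] [ContinuousConstSMul G B]
    [MeasurableSpace B] [BorelSpace B]
    (hminM : ∀ y : M, Dense (Set.range fun s : G => s • y))
    (hminB : ∀ y : B, Dense (Set.range fun s : G => s • y))
    (hsp : ∀ ν : ProbabilityMeasure B, (ν : Measure B).Regular →
      ∃ x : B, (⟨Measure.dirac x, inferInstance⟩ : ProbabilityMeasure B) ∈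
        closure {μ : ProbabilityMeasure B | ∃ s : G,
          μ = ν.map ((continuous_const_smul s).measurable.aemeasurable :
            AEMeasurable (fun y : B => s • y) (ν : Measure B))}) :
    (∀ φ₁ φ₂ : C(B, ℝ) →ₗ[ℝ] C(M, ℝ),
      (φ₁ 1 = 1) → (∀ f : C(B, ℝ), (∀ b, 0 ≤ f b) → ∀ x : M, 0 ≤ φ₁ f x) →
      (∀ (s : G) (f : C(B, ℝ)) (x : M),
        φ₁ (f.comp ⟨fun b => s⁻¹ • b, continuous_const_smul s⁻¹⟩) x = φ₁ f (s⁻¹ • x)) →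
      (φ₂ 1 = 1) → (∀ f : C(B, ℝ), (∀ b, 0 ≤ f b) → ∀ x : M, 0 ≤ φ₂ f x) →
      (∀ (s : G) (f : C(B, ℝ)) (x : M),
        φ₂ (f.comp ⟨fun b => s⁻¹ • b, continuous_const_smul s⁻¹⟩) x = φ₂ f (s⁻¹ • x)) →
      φ₁ = φ₂)
    ∧
    (∀ φ : C(B, ℝ) →ₗ[ℝ] C(M, ℝ),
      (φ 1 = 1) → (∀ f : C(B, ℝ), (∀ b, 0 ≤ f b) → ∀ x : M, 0 ≤ φ f x) →
      (∀ (s : G) (f : C(B, ℝ)) (x : M),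
        φ (f.comp ⟨fun b => s⁻¹ • b, continuous_const_smul s⁻¹⟩) x = φ f (s⁻¹ • x)) →
      (∀ f g : C(B, ℝ), φ (f * g) = φ f * φ g) ∧ Function.Injective φ) := by
  have : MulAction.IsMinimal G M := ⟨hminM⟩
  have : MulAction.IsMinimal G B := ⟨hminB⟩
  exact (stmt_13_general hsp).imp
    (fun hunique φ₁ φ₂ h1₁ hpos₁ hequiv₁ h1₂ hpos₂ hequiv₂ => hunique φ₁ φ₂
      (.of_map_comp_inv_smul h1₁ hpos₁ hequiv₁) (.of_map_comp_inv_smul h1₂ hpos₂ hequiv₂))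
    (fun hhom φ h1 hpos hequiv => hhom φ (.of_map_comp_inv_smul h1 hpos hequiv))
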